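/- arXiv:1604.03089 — 2 statements merged into one kernel-verified Lean document; each statement's English description precedes it below -/
import Mathlib

section
/- Let Φ : M_n(ℂ) → M_n(ℂ) be a positive, unital, trace-preserving linear map, let σ ∈ M_n(ℂ) be positive semidefinite with Φ(σ) = σ, and let ρ ∈ M_n(ℂ) be positive semidefinite with supp ρ ⊆ supp σ. Let α, z ∈ ℝ with α ≥ z ≥ max{1, α/2}. Then Tr( ( σ^{(1−α)/(2z)} Φ(ρ)^{α/z} σ^{(1−α)/(2z)} )^z ) ≤ Tr( ( σ^{(1−α)/(2z)} ρ^{α/z} σ^{(1−α)/(2z)} )^z ), where for α > 1 the negative power σ^{(1−α)/(2z)} is taken in the Moore–Penrose sense (inverting only the nonzero eigenvalues). (For α > 1 this is the monotonicity D_{α,z}(Φ(ρ)‖Φ(σ)) ≤ D_{α,z}(ρ‖σ) of the α-z-Rényi divergence.) -/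
open Matrix
open scoped ComplexOrder

/-- Moore–Penrose power of a matrix: apply `x ↦ x ^ t` to the nonzero eigenvalues
(with `0 ^ t := 0`) via the continuous functional calculus; for `t < 0` this is the
corresponding power of the Moore–Penrose inverse. -/
noncomputable def mpow {n : ℕ} (A : Matrix (Fin n) (Fin n) ℂ) (t : ℝ) :
    Matrix (Fin n) (Fin n) ℂ :=
  cfc (fun x : ℝ => if x = 0 then 0 else x ^ t) A

/-!
Write `D` for the power of `σ` that occurs in the functional and `p = α / z`, so `1 ≤ p ≤ 2`.

A positive unital map satisfies Kadison's inequality `Φ(A)² ≤ Φ(A²)` and Choi's inequality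
`Φ(A)⁻¹ ≤ Φ(A⁻¹)`: since the images of the spectral projections of `A` are positive and sum to `1`,
both say that a weighted variance is nonnegative. Representing `x ↦ x ^ p` as an integral of
functions built from `x ↦ (t + x)⁻¹` turns the second one into `Φ(ρ) ^ p ≤ Φ(ρ ^ p)`.

As `Φ` preserves the trace, Kadison's inequality is an equality at the fixed point `σ`, which forces
`Φ` to respect Jordan products with `σ`, hence with every function of `σ`. In particular
`Φ(D Y D) = D Φ(Y) D`, and therefore `D Φ(ρ) ^ p D ≤ Φ(D ρ ^ p D)`.

Finally, if `W ≤ Φ(Y)`, the eigenvalues of `W` are bounded by the image of those of `Y` under a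
doubly stochastic matrix, so `Tr W ^ z ≤ Tr Y ^ z` by convexity and monotonicity of `x ↦ x ^ z`.
-/

open scoped MatrixOrder

section Spectral

variable {ι : Type*} [Fintype ι] [DecidableEq ι] {A : Matrix ι ι ℂ}

/-- The rank-one projection onto the line spanned by the `k`-th vector of the chosen orthonormal
eigenbasis of a Hermitian matrix. Eigenvalues are repeated according to multiplicity, so this is
finer than the projection onto an eigenspace. -/
noncomputable def eigenprojection (hA : A.IsHermitian) (k : ι) : Matrix ι ι ℂ :=
  Unitary.conjStarAlgAut ℂ _ hA.eigenvectorUnitary (single k k 1)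

lemma isStarProjection_eigenprojection (hA : A.IsHermitian) (k : ι) :
    IsStarProjection (eigenprojection hA k) :=
  IsStarProjection.map
    ⟨by simp [IsIdempotentElem], by simp [IsSelfAdjoint, star_eq_conjTranspose]⟩ _

lemma eigenprojection_nonneg (hA : A.IsHermitian) (k : ι) : 0 ≤ eigenprojection hA k :=
  (isStarProjection_eigenprojection hA k).nonneg

lemma sum_eigenprojection (hA : A.IsHermitian) : ∑ k, eigenprojection hA k = 1 := by
  simp only [eigenprojection, ← map_sum, sum_single_one, map_one]

lemma trace_eigenprojection (hA : A.IsHermitian) (k : ι) : (eigenprojection hA k).trace = 1 := by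
  rw [eigenprojection, Unitary.conjStarAlgAut_apply, trace_mul_cycle, Unitary.coe_star_mul_self]
  simp

lemma cfc_eq_sum_eigenprojection (hA : A.IsHermitian) (f : ℝ → ℝ) :
    cfc f A = ∑ k, f (hA.eigenvalues k) • eigenprojection hA k := by
  have diagonal_eq : diagonal (RCLike.ofReal ∘ f ∘ hA.eigenvalues) =
      ∑ k, (f (hA.eigenvalues k) : ℂ) • single k k (1 : ℂ) := by
    simp [← sum_single_eq_diagonal]
  simp only [hA.cfc_eq f, IsHermitian.cfc, diagonal_eq, map_sum, map_smul, eigenprojection,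
    ← Complex.coe_smul]

lemma eigenprojection_mul_self (hA : A.IsHermitian) (k : ι) :
    eigenprojection hA k * A = hA.eigenvalues k • eigenprojection hA k := by
  have single_mul : single k k (1 : ℂ) * diagonal (RCLike.ofReal ∘ hA.eigenvalues) =
      (hA.eigenvalues k : ℂ) • single k k (1 : ℂ) := by
    ext i j
    by_cases hj : k = j <;> simp [hj, single_apply]
  calc eigenprojection hA k * A
      = Unitary.conjStarAlgAut ℂ _ hA.eigenvectorUnitary
          (single k k 1 * diagonal (RCLike.ofReal ∘ hA.eigenvalues)) := by
        rw [map_mul, ← hA.spectral_theorem, eigenprojection]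
    _ = hA.eigenvalues k • eigenprojection hA k := by
        rw [single_mul, map_smul, Complex.coe_smul, eigenprojection]

lemma re_trace_cfc (hA : A.IsHermitian) (f : ℝ → ℝ) :
    (cfc f A).trace.re = ∑ k, f (hA.eigenvalues k) := by
  simp [cfc_eq_sum_eigenprojection hA, trace_sum, trace_eigenprojection]

end Spectral

section WeightedVariance

variable {R κ : Type*} [Ring R] [StarRing R] [PartialOrder R] [StarOrderedRing R] [Algebra ℝ R]
  [StarModule ℝ R] [IsOrderedModule ℝ R]

-- The difference of the two sides is `∑ k ∈ s, w k • ((c k - C) * E k * (c k - C))`.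
lemma weighted_variance_le (s : Finset κ) {w : κ → ℝ} (hw : ∀ k ∈ s, 0 ≤ w k) (c : κ → ℝ)
    {E : κ → R} (hE : ∀ k ∈ s, 0 ≤ E k) {C : R} (hC : IsSelfAdjoint C) :
    C * (∑ k ∈ s, (w k * c k) • E k) + (∑ k ∈ s, (w k * c k) • E k) * C
      - C * (∑ k ∈ s, w k • E k) * C ≤ ∑ k ∈ s, (w k * c k ^ 2) • E k := by
  have variance_nonneg : 0 ≤ ∑ k ∈ s, w k • ((c k • 1 - C) * E k * (c k • 1 - C)) :=
    Finset.sum_nonneg fun k hk => smul_nonneg (hw k hk) <|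
      (((IsSelfAdjoint.all (c k)).smul (IsSelfAdjoint.one R)).sub hC).conjugate_nonneg (hE k hk)
  rw [← sub_nonneg]
  convert! variance_nonneg using 1
  simp only [Finset.mul_sum, Finset.sum_mul, ← Finset.sum_sub_distrib, ← Finset.sum_add_distrib]
  refine Finset.sum_congr rfl fun k _ => ?_
  simp only [sub_mul, mul_sub, smul_mul_assoc, mul_smul_comm, one_mul, mul_one]
  module

end WeightedVariance

section SpectralImage

variable {ι V : Type*} [Fintype ι] [DecidableEq ι] [AddCommGroup V] [PartialOrder V] [Module ℂ V]
  (Φ : Matrix ι ι ℂ →ₚ[ℂ] V) {A : Matrix ι ι ℂ}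

lemma map_cfc_eq_sum (hA : A.IsHermitian) (f : ℝ → ℝ) :
    Φ (cfc f A) = ∑ k, f (hA.eigenvalues k) • Φ (eigenprojection hA k) := by
  simp only [cfc_eq_sum_eigenprojection hA, map_sum, PositiveLinearMap.map_smul_of_tower]

lemma map_eq_sum (hA : A.IsHermitian) :
    Φ A = ∑ k, hA.eigenvalues k • Φ (eigenprojection hA k) := by
  rw [← map_cfc_eq_sum Φ hA (fun x => x), cfc_id' ℝ A hA.isSelfAdjoint]

lemma sum_map_eigenprojection (hA : A.IsHermitian) :
    ∑ k, Φ (eigenprojection hA k) = Φ 1 := by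
  rw [← map_sum, sum_eigenprojection]

end SpectralImage

lemma isStrictlyPositive_map {𝒜 ℬ : Type*} [CStarAlgebra 𝒜] [PartialOrder 𝒜] [StarOrderedRing 𝒜]
    [CStarAlgebra ℬ] [PartialOrder ℬ] [StarOrderedRing ℬ] (Φ : 𝒜 →ₚ[ℂ] ℬ) (h_one : Φ 1 = 1)
    {a : 𝒜} (ha : IsStrictlyPositive a) : IsStrictlyPositive (Φ a) := by
  cases subsingleton_or_nontrivial 𝒜
  · simpa only [Subsingleton.elim a 1, h_one] using isStrictlyPositive_one
  obtain ⟨r, hr, hra⟩ := (CFC.exists_pos_algebraMap_le_iff (.of_nonneg ha.nonneg)).2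
    ((StarOrderedRing.isStrictlyPositive_iff_spectrum_pos a (.of_nonneg ha.nonneg)).1 ha)
  have hr_map : algebraMap ℝ ℬ r ≤ Φ a := by
    simpa only [Algebra.algebraMap_eq_smul_one, PositiveLinearMap.map_smul_of_tower, h_one]
      using OrderHomClass.mono Φ hra
  exact (isStrictlyPositive_algebraMap hr).of_le hr_map

section SchwarzInequalities

variable {ι κ : Type*} [Fintype ι] [DecidableEq ι] [Fintype κ] [DecidableEq κ]
  (Φ : Matrix ι ι ℂ →ₚ[ℂ] Matrix κ κ ℂ) {A : Matrix ι ι ℂ}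

lemma map_sq_le_map_sq (h_one : Φ 1 = 1) (hA : IsSelfAdjoint A) : Φ A ^ 2 ≤ Φ (A ^ 2) := by
  have hH : A.IsHermitian := hA
  have := weighted_variance_le Finset.univ (w := 1) (by simp) hH.eigenvalues
    (fun k _ => Φ.map_nonneg (eigenprojection_nonneg hH k)) (hA.map Φ)
  simpa only [Pi.one_apply, one_mul, one_smul, ← map_eq_sum, sum_map_eigenprojection, h_one,
    mul_one, add_sub_cancel_right, ← pow_two, ← map_cfc_eq_sum Φ hH (fun x => x ^ 2),
    cfc_pow_id (R := ℝ) A 2 hA] using this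

open scoped Matrix.Norms.L2Operator in
lemma inv_map_le_map_inv (h_one : Φ 1 = 1) (hA : A.PosDef) : (Φ A)⁻¹ ≤ Φ A⁻¹ := by
  have hH := hA.isHermitian
  have hΦA : IsStrictlyPositive (Φ A) := isStrictlyPositive_map Φ h_one hA.isStrictlyPositive
  have hinv : A⁻¹ = cfc (fun x : ℝ => x⁻¹) A := by
    rw [nonsing_inv_eq_ringInverse, cfc_ringInverse_id (R := ℝ) A hA.isUnit hH.isSelfAdjoint]
  have mul_inv_sq k : hH.eigenvalues k * (hH.eigenvalues k)⁻¹ ^ 2 = (hH.eigenvalues k)⁻¹ := by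
    rw [pow_two, mul_inv_cancel_left₀ (hA.eigenvalues_pos k).ne']
  have mul_inv k : hH.eigenvalues k * (hH.eigenvalues k)⁻¹ = 1 :=
    mul_inv_cancel₀ (hA.eigenvalues_pos k).ne'
  have := weighted_variance_le Finset.univ (fun k _ => (hA.eigenvalues_pos k).le)
    (fun k => (hH.eigenvalues k)⁻¹) (fun k _ => Φ.map_nonneg (eigenprojection_nonneg hH k))
    (Matrix.isStrictlyPositive_iff_posDef.1 hΦA).isHermitian.inv
  simpa only [mul_inv, mul_inv_sq, one_smul, sum_map_eigenprojection, h_one, ← map_eq_sum, mul_one,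
    one_mul, nonsing_inv_mul _ ((isUnit_iff_isUnit_det _).1 hΦA.isUnit), add_sub_cancel_right,
    ← map_cfc_eq_sum Φ hH (fun x => x⁻¹), ← hinv] using this

end SchwarzInequalities

section OperatorJensen

open MeasureTheory
open scoped Matrix.Norms.L2Operator

variable {ι κ : Type*} [Fintype ι] [DecidableEq ι] [Fintype κ] [DecidableEq κ]
  {A : Matrix ι ι ℂ} {T : Type*} [MeasurableSpace T] {μ : Measure T} {F : T → ℝ → ℝ}

lemma integrable_cfc_of_forall_mem_spectrum (hA : A.IsHermitian)
    (hF : ∀ x ∈ spectrum ℝ A, Integrable (F · x) μ) :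
    Integrable (fun t => cfc (F t) A) μ := by
  simp only [cfc_eq_sum_eigenprojection hA]
  exact integrable_finsetSum _ fun k _ => (hF _ (hA.eigenvalues_mem_spectrum_real k)).smul_const _

lemma cfc_integral_eq_integral_cfc (hA : A.IsHermitian)
    (hF : ∀ x ∈ spectrum ℝ A, Integrable (F · x) μ) :
    cfc (fun x => ∫ t, F t x ∂μ) A = ∫ t, cfc (F t) A ∂μ := by
  simp only [cfc_eq_sum_eigenprojection hA, ← integral_smul_const]
  exact (integral_finsetSum _ fun k _ =>
    (hF _ (hA.eigenvalues_mem_spectrum_real k)).smul_const _).symm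

lemma cfc_integral_map_le (Φ : Matrix ι ι ℂ →ₚ[ℂ] Matrix κ κ ℂ) (hA : A.IsHermitian)
    (hF : ∀ x ∈ spectrum ℝ A, Integrable (F · x) μ)
    (hF_map : ∀ x ∈ spectrum ℝ (Φ A), Integrable (F · x) μ)
    (h_le : ∀ᵐ t ∂μ, cfc (F t) (Φ A) ≤ Φ (cfc (F t) A)) :
    cfc (fun x => ∫ t, F t x ∂μ) (Φ A) ≤ Φ (cfc (fun x => ∫ t, F t x ∂μ) A) := by
  let Ψ : Matrix ι ι ℂ →L[ℂ] Matrix κ κ ℂ := ⟨Φ.toLinearMap, map_continuous Φ⟩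
  have hΦA : (Φ A).IsHermitian := hA.isSelfAdjoint.map Φ
  have h_int : Integrable (fun t => cfc (F t) A) μ := integrable_cfc_of_forall_mem_spectrum hA hF
  calc cfc (fun x => ∫ t, F t x ∂μ) (Φ A)
      = ∫ t, cfc (F t) (Φ A) ∂μ := cfc_integral_eq_integral_cfc hΦA hF_map
    _ ≤ ∫ t, Ψ (cfc (F t) A) ∂μ :=
        integral_mono_ae (integrable_cfc_of_forall_mem_spectrum hΦA hF_map)
          (Ψ.integrable_comp h_int) h_le
    _ = Ψ (∫ t, cfc (F t) A ∂μ) := Ψ.integral_comp_comm h_int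
    _ = Φ (cfc (fun x => ∫ t, F t x ∂μ) A) := by rw [cfc_integral_eq_integral_cfc hA hF]; rfl

lemma cfc_inv_const_add (hA : 0 ≤ A) {t : ℝ} (ht : 0 < t) :
    cfc (fun x : ℝ => (t + x)⁻¹) A = (algebraMap ℝ _ t + A)⁻¹ := by
  have hA' : IsSelfAdjoint A := .of_nonneg hA
  rw [nonsing_inv_eq_ringInverse, cfc_inv _ A fun x hx =>
    (add_pos_of_pos_of_nonneg ht (spectrum_nonneg_of_nonneg hA hx)).ne', cfc_const_add t _ A,
    cfc_id' ℝ A]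

lemma cfc_rpowIntegrand₁₂_eq (hA : 0 ≤ A) (p : ℝ) {t : ℝ} (ht : 0 < t) :
    cfc (Real.rpowIntegrand₁₂ p t) A =
      t ^ (p - 1) • (t⁻¹ • A + t • (algebraMap ℝ _ t + A)⁻¹ - 1) := by
  have hA' : IsSelfAdjoint A := .of_nonneg hA
  have cont (f : ℝ → ℝ) : ContinuousOn f (spectrum ℝ A) := finite_real_spectrum.continuousOn f
  change cfc (fun x => t ^ (p - 1) * (t⁻¹ * x + t * (t + x)⁻¹ - 1)) A = _
  rw [cfc_const_mul _ _ A (cont _), cfc_sub _ _ A (cont _) (cont _),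
    cfc_add A _ _ (cont _) (cont _), cfc_const_mul _ _ A (cont _), cfc_const_mul _ _ A (cont _),
    cfc_id' ℝ A, cfc_const_one ℝ A, cfc_inv_const_add hA ht]

lemma cfc_rpowIntegrand₁₂_map_le (Φ : Matrix ι ι ℂ →ₚ[ℂ] Matrix κ κ ℂ) (h_one : Φ 1 = 1)
    (hA : 0 ≤ A) (p : ℝ) {t : ℝ} (ht : 0 < t) :
    cfc (Real.rpowIntegrand₁₂ p t) (Φ A) ≤ Φ (cfc (Real.rpowIntegrand₁₂ p t) A) := by
  have map_shift : Φ (algebraMap ℝ _ t + A) = algebraMap ℝ _ t + Φ A := by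
    simp only [Algebra.algebraMap_eq_smul_one, map_add, PositiveLinearMap.map_smul_of_tower, h_one]
  have choi : (algebraMap ℝ _ t + Φ A)⁻¹ ≤ Φ (algebraMap ℝ _ t + A)⁻¹ := by
    rw [← map_shift]
    exact inv_map_le_map_inv Φ h_one <|
      isStrictlyPositive_iff_posDef.1 ((isStrictlyPositive_algebraMap ht).add_nonneg hA)
  rw [cfc_rpowIntegrand₁₂_eq hA p ht, cfc_rpowIntegrand₁₂_eq (Φ.map_nonneg hA) p ht]
  simp only [map_sub, map_add, PositiveLinearMap.map_smul_of_tower, h_one]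
  gcongr

lemma rpow_map_le_map_rpow (Φ : Matrix ι ι ℂ →ₚ[ℂ] Matrix κ κ ℂ) (h_one : Φ 1 = 1)
    (hA : 0 ≤ A) {p : ℝ} (hp : p ∈ Set.Icc 1 2) : Φ A ^ p ≤ Φ (A ^ p) := by
  have hΦA : 0 ≤ Φ A := Φ.map_nonneg hA
  rcases eq_or_lt_of_le hp.1 with rfl | one_lt
  · rw [CFC.rpow_one _ hΦA, CFC.rpow_one _ hA]
  rcases eq_or_lt_of_le hp.2 with rfl | lt_two
  · simpa only [← CFC.rpow_natCast _ 2 hΦA, ← CFC.rpow_natCast _ 2 hA, Nat.cast_ofNat]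
      using map_sq_le_map_sq Φ h_one (IsSelfAdjoint.of_nonneg hA)
  obtain ⟨μ, hμ⟩ := Real.exists_measure_rpow_eq_integral_rpowIntegrand₁₂ ⟨one_lt, lt_two⟩
  rw [CFC.rpow_eq_cfc_real hΦA, CFC.rpow_eq_cfc_real hA,
    cfc_congr fun x hx => (hμ x (spectrum_nonneg_of_nonneg hΦA hx)).2,
    cfc_congr fun x hx => (hμ x (spectrum_nonneg_of_nonneg hA hx)).2]
  refine cfc_integral_map_le Φ (IsSelfAdjoint.of_nonneg hA)
    (fun x hx => (hμ x (spectrum_nonneg_of_nonneg hA hx)).1)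
    (fun x hx => (hμ x (spectrum_nonneg_of_nonneg hΦA hx)).1) ?_
  filter_upwards [ae_restrict_mem measurableSet_Ioi] with t ht
  exact cfc_rpowIntegrand₁₂_map_le Φ h_one hA p ht

end OperatorJensen

section QuadraticPerturbation

open Filter Topology

variable {E : Type*} [AddCommGroup E] [PartialOrder E] [Module ℝ E] [IsOrderedModule ℝ E]
  [TopologicalSpace E] [ContinuousAdd E] [ContinuousSMul ℝ E] [OrderClosedTopology E] {x y : E}

lemma nonneg_of_forall_pos_smul_add_sq_smul_nonneg
    (h : ∀ t : ℝ, 0 < t → 0 ≤ t • x + t ^ 2 • y) : 0 ≤ x := by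
  have tendsto_x : Tendsto (fun t : ℝ => x + t • y) (𝓝[>] 0) (𝓝 x) := by
    have : Continuous fun t : ℝ => x + t • y := by fun_prop
    simpa using (this.tendsto 0).mono_left nhdsWithin_le_nhds
  refine ge_of_tendsto tendsto_x ?_
  filter_upwards [self_mem_nhdsWithin] with t ht
  rw [Set.mem_Ioi] at ht
  have := smul_nonneg (inv_nonneg.2 ht.le) (h t ht)
  rwa [smul_add, smul_smul, smul_smul, pow_two, inv_mul_cancel₀ ht.ne',
    inv_mul_cancel_left₀ ht.ne', one_smul] at this

lemma eq_zero_of_forall_smul_add_sq_smul_nonneg [IsOrderedAddMonoid E]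
    (h : ∀ t : ℝ, 0 ≤ t • x + t ^ 2 • y) : x = 0 := by
  refine le_antisymm (neg_nonneg.1 ?_) ?_
  · exact nonneg_of_forall_pos_smul_add_sq_smul_nonneg (y := y) fun t _ => by simpa using h (-t)
  · exact nonneg_of_forall_pos_smul_add_sq_smul_nonneg fun t _ => h t

end QuadraticPerturbation

lemma conjugate_add_conjugate {R : Type*} [Ring R] (a b : R) : a * b * a + a * b * a =
    a * (a * b + b * a) + (a * b + b * a) * a - (a ^ 2 * b + b * a ^ 2) := by
  noncomm_ring

section MultiplicativeDomain

variable {ι κ : Type*} [Fintype ι] [DecidableEq ι] [Fintype κ] [DecidableEq κ]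
  (Φ : Matrix ι ι ℂ →ₚ[ℂ] Matrix κ κ ℂ) {A : Matrix ι ι ℂ}

open scoped Matrix.Norms.L2Operator in
-- Kadison's inequality for `A + t • Y` holds for all `t` of either sign, with equality at `t = 0`,
-- so the term linear in `t` vanishes.
lemma map_mul_add_mul_of_map_sq_of_isSelfAdjoint (h_one : Φ 1 = 1) (hA : IsSelfAdjoint A)
    (h_sq : Φ (A ^ 2) = Φ A ^ 2) {Y : Matrix ι ι ℂ} (hY : IsSelfAdjoint Y) :
    Φ (A * Y + Y * A) = Φ A * Φ Y + Φ Y * Φ A := by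
  rw [← sub_eq_zero]
  refine eq_zero_of_forall_smul_add_sq_smul_nonneg (y := Φ (Y ^ 2) - Φ Y ^ 2) fun t => ?_
  have hAY : IsSelfAdjoint (A + t • Y) := hA.add ((IsSelfAdjoint.all t).smul hY)
  convert! sub_nonneg.2 (map_sq_le_map_sq Φ h_one hAY) using 1
  rw [pow_two] at h_sq
  simp only [pow_two, mul_add, add_mul, map_add, smul_mul_assoc, mul_smul_comm,
    PositiveLinearMap.map_smul_of_tower, h_sq]
  module

lemma map_mul_add_mul_of_map_sq (h_one : Φ 1 = 1) (hA : IsSelfAdjoint A)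
    (h_sq : Φ (A ^ 2) = Φ A ^ 2) (Y : Matrix ι ι ℂ) :
    Φ (A * Y + Y * A) = Φ A * Φ Y + Φ Y * Φ A := by
  have jordan (Z : selfAdjoint (Matrix ι ι ℂ)) :=
    map_mul_add_mul_of_map_sq_of_isSelfAdjoint Φ h_one hA h_sq Z.2
  have split (Z W : Matrix ι ι ℂ) : A * (Z + Complex.I • W) + (Z + Complex.I • W) * A =
      (A * Z + Z * A) + Complex.I • (A * W + W * A) := by
    simp only [mul_add, add_mul, smul_mul_assoc, mul_smul_comm]
    module
  rw [← realPart_add_I_smul_imaginaryPart Y, split, map_add, map_smul, jordan, jordan]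
  simp only [map_add, map_smul, mul_add, add_mul, smul_mul_assoc, mul_smul_comm]
  module

lemma map_pow_of_map_sq (h_one : Φ 1 = 1) (hA : IsSelfAdjoint A) (h_sq : Φ (A ^ 2) = Φ A ^ 2)
    (k : ℕ) : Φ (A ^ k) = Φ A ^ k := by
  induction k with
  | zero => simpa only [pow_zero] using h_one
  | succ k ih =>
    have jordan := map_mul_add_mul_of_map_sq Φ h_one hA h_sq (A ^ k)
    rw [ih, ← pow_succ, ← pow_succ', ← pow_succ, ← pow_succ', ← two_smul ℂ, ← two_smul ℂ,
      map_smul] at jordan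
    exact smul_right_injective _ two_ne_zero jordan

lemma map_aeval_of_map_sq (h_one : Φ 1 = 1) (hA : IsSelfAdjoint A)
    (h_sq : Φ (A ^ 2) = Φ A ^ 2) (q : Polynomial ℝ) :
    Φ (q.aeval A) = q.aeval (Φ A) := by
  simp only [Polynomial.aeval_eq_sum_range, map_sum, PositiveLinearMap.map_smul_of_tower,
    map_pow_of_map_sq Φ h_one hA h_sq]

lemma map_cfc_of_map_sq (h_one : Φ 1 = 1) (hA : IsSelfAdjoint A) (h_sq : Φ (A ^ 2) = Φ A ^ 2)
    (f : ℝ → ℝ) : Φ (cfc f A) = cfc f (Φ A) := by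
  have h_fin : (spectrum ℝ A ∪ spectrum ℝ (Φ A)).Finite :=
    finite_real_spectrum.union finite_real_spectrum
  let q : Polynomial ℝ := Lagrange.interpolate h_fin.toFinset id f
  have eval_q x (hx : x ∈ spectrum ℝ A ∪ spectrum ℝ (Φ A)) : f x = q.eval x :=
    (Lagrange.eval_interpolate_at_node (v := id) f Function.injective_id.injOn
      (h_fin.mem_toFinset.2 hx)).symm
  rw [cfc_congr fun x hx => eval_q x (.inl hx), cfc_congr fun x hx => eval_q x (.inr hx),
    cfc_polynomial q A hA, cfc_polynomial q (Φ A) (hA.map Φ), map_aeval_of_map_sq Φ h_one hA h_sq]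

lemma map_conjugate_of_map_sq (h_one : Φ 1 = 1) (hA : IsSelfAdjoint A)
    (h_sq : Φ (A ^ 2) = Φ A ^ 2) (Y : Matrix ι ι ℂ) :
    Φ (A * Y * A) = Φ A * Φ Y * Φ A := by
  have jordan := map_mul_add_mul_of_map_sq Φ h_one hA h_sq
  have h_sq_sq : Φ ((A ^ 2) ^ 2) = Φ (A ^ 2) ^ 2 := by
    rw [h_sq, ← pow_mul, ← pow_mul, map_pow_of_map_sq Φ h_one hA h_sq]
  have jordan_sq := map_mul_add_mul_of_map_sq Φ h_one (hA.pow 2) h_sq_sq Y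
  rw [h_sq] at jordan_sq
  refine smul_right_injective _ (two_ne_zero (α := ℂ)) ?_
  simp only [two_smul, ← map_add, conjugate_add_conjugate, map_sub, jordan, jordan_sq]

lemma map_cfc_conjugate_of_map_sq (h_one : Φ 1 = 1) (hA : IsSelfAdjoint A)
    (h_sq : Φ (A ^ 2) = Φ A ^ 2) (f : ℝ → ℝ) (Y : Matrix ι ι ℂ) :
    Φ (cfc f A * Y * cfc f A) = cfc f (Φ A) * Φ Y * cfc f (Φ A) := by
  have h_cfc := map_cfc_of_map_sq Φ h_one hA h_sq
  have h_cfc_sq : Φ (cfc f A ^ 2) = Φ (cfc f A) ^ 2 := by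
    rw [← cfc_pow f 2 A (finite_real_spectrum.continuousOn f), h_cfc, h_cfc,
      cfc_pow f 2 (Φ A) (finite_real_spectrum.continuousOn f)]
  rw [map_conjugate_of_map_sq Φ h_one (cfc_predicate f A) h_cfc_sq, h_cfc]

lemma map_sq_of_isFixedPt (Φ : Matrix ι ι ℂ →ₚ[ℂ] Matrix ι ι ℂ) (h_one : Φ 1 = 1)
    (h_trace : ∀ X, (Φ X).trace = X.trace) (hA : IsSelfAdjoint A) (h_fix : Φ A = A) :
    Φ (A ^ 2) = Φ A ^ 2 := by
  have kadison : (Φ (A ^ 2) - Φ A ^ 2).PosSemidef := map_sq_le_map_sq Φ h_one hA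
  have trace_zero : (Φ (A ^ 2) - Φ A ^ 2).trace = 0 := by
    rw [trace_sub, h_trace, h_fix, sub_self]
  exact sub_eq_zero.1 (kadison.trace_eq_zero_iff.1 trace_zero)

end MultiplicativeDomain

lemma sum_comp_le_sum_comp_of_le_mulVec {ι : Type*} [Fintype ι] [DecidableEq ι]
    {M : Matrix ι ι ℝ} (hM : M ∈ doublyStochastic ℝ ι) {s : Set ℝ} {f : ℝ → ℝ}
    (hf : ConvexOn ℝ s f) (hf_mono : MonotoneOn f s) {w y : ι → ℝ} (hw : ∀ i, w i ∈ s)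
    (hy : ∀ k, y k ∈ s) (h_le : w ≤ M *ᵥ y) : ∑ i, f (w i) ≤ ∑ k, f (y k) := by
  obtain ⟨h_nonneg, h_row, h_col⟩ := mem_doublyStochastic_iff_sum.1 hM
  have h_mem i : ∑ k, M i k • y k ∈ s :=
    hf.1.sum_mem (fun k _ => h_nonneg i k) (h_row i) fun k _ => hy k
  calc ∑ i, f (w i)
      ≤ ∑ i, f (∑ k, M i k • y k) :=
        Finset.sum_le_sum fun i _ => hf_mono (hw i) (h_mem i) (h_le i)
    _ ≤ ∑ i, ∑ k, M i k • f (y k) := Finset.sum_le_sum fun i _ =>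
        hf.map_sum_le (fun k _ => h_nonneg i k) (h_row i) fun k _ => hy k
    _ = ∑ k, f (y k) := by
        rw [Finset.sum_comm]
        simp only [← Finset.sum_smul, h_col, one_smul]

lemma re_trace_mul_nonneg_of_isStarProjection {ι : Type*} [Fintype ι]
    {P B : Matrix ι ι ℂ} (hP : IsStarProjection P) (hB : 0 ≤ B) : 0 ≤ (P * B).trace.re := by
  have trace_eq : (P * B).trace = (P * B * P).trace := by
    rw [trace_mul_cycle, hP.isIdempotentElem.eq]
  rw [trace_eq]
  exact (Complex.le_def.1
    (nonneg_iff_posSemidef.1 (hP.isSelfAdjoint.conjugate_nonneg hB)).trace_nonneg).1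

section TraceInequality

variable {ι κ : Type*} [Fintype ι] [DecidableEq ι] [Fintype κ] [DecidableEq κ]

/-- The matrix of transition probabilities from the eigenlines of `Y` to those of `W` under the
positive map `Φ`: the `(i, k)` entry is `Tr (Pᵢ Φ(Qₖ))` for the rank-one spectral projections `Pᵢ`
of `W` and `Qₖ` of `Y`. -/
noncomputable def transitionMatrix (Φ : Matrix ι ι ℂ →ₚ[ℂ] Matrix κ κ ℂ) {W : Matrix κ κ ℂ}
    (hW : W.IsHermitian) {Y : Matrix ι ι ℂ} (hY : Y.IsHermitian) : Matrix κ ι ℝ :=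
  of fun i k => (eigenprojection hW i * Φ (eigenprojection hY k)).trace.re

lemma le_transitionMatrix_mulVec_eigenvalues (Φ : Matrix ι ι ℂ →ₚ[ℂ] Matrix κ κ ℂ)
    {W : Matrix κ κ ℂ} (hW : W.IsHermitian) {Y : Matrix ι ι ℂ} (hY : Y.IsHermitian)
    (h_le : W ≤ Φ Y) : hW.eigenvalues ≤ transitionMatrix Φ hW hY *ᵥ hY.eigenvalues := by
  intro i
  have h_nonneg := re_trace_mul_nonneg_of_isStarProjection
    (isStarProjection_eigenprojection hW i) (sub_nonneg.2 h_le)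
  rw [mul_sub, trace_sub, Complex.sub_re, sub_nonneg] at h_nonneg
  calc hW.eigenvalues i
      = (eigenprojection hW i * W).trace.re := by
        simp [eigenprojection_mul_self, trace_eigenprojection]
    _ ≤ (eigenprojection hW i * Φ Y).trace.re := h_nonneg
    _ = (transitionMatrix Φ hW hY *ᵥ hY.eigenvalues) i := by
        simp [map_eq_sum Φ hY, Finset.mul_sum, trace_sum, mulVec, dotProduct, transitionMatrix,
          mul_comm]

variable (Φ : Matrix ι ι ℂ →ₚ[ℂ] Matrix ι ι ℂ)

lemma transitionMatrix_mem_doublyStochastic (h_one : Φ 1 = 1)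
    (h_trace : ∀ X, (Φ X).trace = X.trace) {W Y : Matrix ι ι ℂ} (hW : W.IsHermitian)
    (hY : Y.IsHermitian) : transitionMatrix Φ hW hY ∈ doublyStochastic ℝ ι := by
  refine mem_doublyStochastic_iff_sum.2 ⟨fun i k => ?_, fun i => ?_, fun k => ?_⟩
  · exact re_trace_mul_nonneg_of_isStarProjection (isStarProjection_eigenprojection hW i)
      (Φ.map_nonneg (eigenprojection_nonneg hY k))
  · simp only [transitionMatrix, of_apply, ← Complex.re_sum, ← trace_sum, ← Finset.mul_sum,
      sum_map_eigenprojection, h_one, mul_one, trace_eigenprojection, Complex.one_re]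
  · simp only [transitionMatrix, of_apply, ← Complex.re_sum, ← trace_sum, ← Finset.sum_mul,
      sum_eigenprojection, one_mul, h_trace, trace_eigenprojection, Complex.one_re]

lemma re_trace_cfc_le_of_le_map (h_one : Φ 1 = 1)
    (h_trace : ∀ X, (Φ X).trace = X.trace) {s : Set ℝ} {f : ℝ → ℝ} (hf : ConvexOn ℝ s f)
    (hf_mono : MonotoneOn f s) {W Y : Matrix ι ι ℂ} (hW : W.IsHermitian) (hY : Y.IsHermitian)
    (hWs : spectrum ℝ W ⊆ s) (hYs : spectrum ℝ Y ⊆ s) (h_le : W ≤ Φ Y) :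
    (cfc f W).trace.re ≤ (cfc f Y).trace.re := by
  rw [re_trace_cfc hW, re_trace_cfc hY]
  exact sum_comp_le_sum_comp_of_le_mulVec
    (transitionMatrix_mem_doublyStochastic Φ h_one h_trace hW hY) hf hf_mono
    (fun i => hWs (hW.eigenvalues_mem_spectrum_real i))
    (fun k => hYs (hY.eigenvalues_mem_spectrum_real k))
    (le_transitionMatrix_mulVec_eigenvalues Φ hW hY h_le)

lemma re_trace_rpow_le_of_le_map (h_one : Φ 1 = 1)
    (h_trace : ∀ X, (Φ X).trace = X.trace) {W Y : Matrix ι ι ℂ} (hW : 0 ≤ W) (hY : 0 ≤ Y)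
    (h_le : W ≤ Φ Y) {z : ℝ} (hz : 1 ≤ z) : (W ^ z).trace.re ≤ (Y ^ z).trace.re := by
  rw [CFC.rpow_eq_cfc_real hW, CFC.rpow_eq_cfc_real hY]
  exact re_trace_cfc_le_of_le_map Φ h_one h_trace (convexOn_rpow hz)
    (Real.monotoneOn_rpow_Ici_of_exponent_nonneg (zero_le_one.trans hz))
    (IsSelfAdjoint.of_nonneg hW) (IsSelfAdjoint.of_nonneg hY)
    (fun _ hx => spectrum_nonneg_of_nonneg hW hx) (fun _ hx => spectrum_nonneg_of_nonneg hY hx)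
    h_le

theorem re_trace_rpow_cfc_conjugate_map_le (h_one : Φ 1 = 1)
    (h_trace : ∀ X, (Φ X).trace = X.trace) {σ : Matrix ι ι ℂ} (hσ : IsSelfAdjoint σ)
    (h_fix : Φ σ = σ) (f : ℝ → ℝ) {ρ : Matrix ι ι ℂ} (hρ : 0 ≤ ρ) {p z : ℝ}
    (hp : p ∈ Set.Icc 1 2) (hz : 1 ≤ z) :
    ((cfc f σ * Φ ρ ^ p * cfc f σ) ^ z).trace.re ≤ ((cfc f σ * ρ ^ p * cfc f σ) ^ z).trace.re := by
  have hD : IsSelfAdjoint (cfc f σ) := cfc_predicate f σ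
  have map_weight (Y : Matrix ι ι ℂ) :
      Φ (cfc f σ * Y * cfc f σ) = cfc f σ * Φ Y * cfc f σ := by
    simpa only [h_fix] using map_cfc_conjugate_of_map_sq Φ h_one hσ
      (map_sq_of_isFixedPt Φ h_one h_trace hσ h_fix) f Y
  refine re_trace_rpow_le_of_le_map Φ h_one h_trace (hD.conjugate_nonneg CFC.rpow_nonneg)
    (hD.conjugate_nonneg CFC.rpow_nonneg) ?_ hz
  rw [map_weight]
  exact hD.conjugate_le_conjugate (rpow_map_le_map_rpow Φ h_one hρ hp)

end TraceInequality

lemma mpow_eq_rpow {n : ℕ} {A : Matrix (Fin n) (Fin n) ℂ} (hA : 0 ≤ A) {t : ℝ} (ht : t ≠ 0) :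
    mpow A t = A ^ t := by
  rw [CFC.rpow_eq_cfc_real hA, mpow]
  refine cfc_congr fun x _ => ?_
  rcases eq_or_ne x 0 with rfl | hx
  · simp only [if_true, Real.zero_rpow ht]
  · exact if_neg hx

theorem stmt6_general {n : ℕ}
    (Φ : Matrix (Fin n) (Fin n) ℂ →ₗ[ℂ] Matrix (Fin n) (Fin n) ℂ)
    (hΦpos : ∀ X, X.PosSemidef → (Φ X).PosSemidef)
    (hΦunital : Φ 1 = 1) (hΦtr : ∀ X, (Φ X).trace = X.trace)
    {σ : Matrix (Fin n) (Fin n) ℂ} (hσ : σ.IsHermitian) (hfix : Φ σ = σ) (f : ℝ → ℝ)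
    {ρ : Matrix (Fin n) (Fin n) ℂ} (hρ : ρ.PosSemidef)
    {p z : ℝ} (hp : p ∈ Set.Icc 1 2) (hz : 1 ≤ z) :
    (mpow (cfc f σ * mpow (Φ ρ) p * cfc f σ) z).trace.re
      ≤ (mpow (cfc f σ * mpow ρ p * cfc f σ) z).trace.re := by
  let Ψ := PositiveLinearMap.mk₀ Φ fun X hX => (hΦpos X (nonneg_iff_posSemidef.1 hX)).nonneg
  have hp0 : p ≠ 0 := (zero_lt_one.trans_le hp.1).ne'
  have hz0 : z ≠ 0 := (zero_lt_one.trans_le hz).ne'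
  have hD : IsSelfAdjoint (cfc f σ) := cfc_predicate f σ
  rw [mpow_eq_rpow (hΦpos ρ hρ).nonneg hp0, mpow_eq_rpow hρ.nonneg hp0,
    mpow_eq_rpow (hD.conjugate_nonneg CFC.rpow_nonneg) hz0,
    mpow_eq_rpow (hD.conjugate_nonneg CFC.rpow_nonneg) hz0]
  exact re_trace_rpow_cfc_conjugate_map_le Ψ hΦunital hΦtr hσ hfix f hρ.nonneg hp hz

/-- monotonicity of the α-z-Rényi trace functional
(`α ≥ z ≥ max{1, α/2}`) under a positive unital trace-preserving map fixing `σ`,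
for `ρ` with `supp ρ ⊆ supp σ`:
`Tr((σ^{(1−α)/(2z)} Φ(ρ)^{α/z} σ^{(1−α)/(2z)})^z) ≤ Tr((σ^{(1−α)/(2z)} ρ^{α/z} σ^{(1−α)/(2z)})^z)`. -/
theorem stmt6 {n : ℕ}
    (Φ : Matrix (Fin n) (Fin n) ℂ →ₗ[ℂ] Matrix (Fin n) (Fin n) ℂ)
    (hΦpos : ∀ X, X.PosSemidef → (Φ X).PosSemidef)
    (hΦunital : Φ 1 = 1) (hΦtr : ∀ X, (Φ X).trace = X.trace)
    (σ : Matrix (Fin n) (Fin n) ℂ) (hσ : σ.PosSemidef) (hfix : Φ σ = σ)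
    (ρ : Matrix (Fin n) (Fin n) ℂ) (hρ : ρ.PosSemidef)
    (hsupp : ∀ v : Fin n → ℂ, σ *ᵥ v = 0 → ρ *ᵥ v = 0)
    (α z : ℝ) (hαz : z ≤ α) (hz1 : 1 ≤ z) (hz2 : α / 2 ≤ z) :
    (Matrix.trace (mpow (mpow σ ((1 - α) / (2 * z)) * mpow (Φ ρ) (α / z) *
        mpow σ ((1 - α) / (2 * z))) z)).re
      ≤ (Matrix.trace (mpow (mpow σ ((1 - α) / (2 * z)) * mpow ρ (α / z) *
          mpow σ ((1 - α) / (2 * z))) z)).re := by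
  have hz0 : 0 < z := zero_lt_one.trans_le hz1
  exact stmt6_general Φ hΦpos hΦunital hΦtr hσ.isHermitian hfix _ hρ
    ⟨(one_le_div₀ hz0).2 hαz, (div_le_iff₀ hz0).2 (by linarith)⟩ hz1
end

section
/- Let f : (0,∞) → ℝ be operator convex. (1) For all positive semidefinite ρ, σ ∈ M_n(ℂ), the limit Ŝ_f(ρ‖σ) := lim_{ε→0⁺} Tr( (σ+εI)^{1/2} f( (σ+εI)^{−1/2} (ρ+εI) (σ+εI)^{−1/2} ) (σ+εI)^{1/2} ) exists in (−∞, +∞] (i.e., as ε → 0⁺ the expression either converges to a real number or tends to +∞). (2) The resulting maximal f-divergence is jointly convex: for positive semidefinite ρ_i, σ_i ∈ M_n(ℂ) and weights λ_i ≥ 0 (i = 1,…,k), Ŝ_f( Σ_i λ_i ρ_i ‖ Σ_i λ_i σ_i ) ≤ Σ_i λ_i Ŝ_f(ρ_i‖σ_i), the inequality understood in (−∞, +∞]. -/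
open Matrix Filter
open scoped ComplexOrder

/-- `f : (0,∞) → ℝ` is operator convex. -/
def OperatorConvexOn (f : ℝ → ℝ) : Prop :=
  ∀ (m : ℕ) (A B : Matrix (Fin m) (Fin m) ℂ), A.PosDef → B.PosDef →
    ∀ t : ℝ, 0 ≤ t → t ≤ 1 →
      (t • cfc f A + (1 - t) • cfc f B - cfc f (t • A + (1 - t) • B)).PosSemidef

/-- The ε-regularized maximal `f`-divergence
`Tr((σ+εI)^{1/2} f((σ+εI)^{-1/2}(ρ+εI)(σ+εI)^{-1/2}) (σ+εI)^{1/2})`. -/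
noncomputable def maxSfEps {n : ℕ} (f : ℝ → ℝ) (ρ σ : Matrix (Fin n) (Fin n) ℂ)
    (ε : ℝ) : ℝ :=
  (Matrix.trace (mpow (σ + ε • 1) (1/2) *
    cfc f (mpow (σ + ε • 1) (-(1/2)) * (ρ + ε • 1) * mpow (σ + ε • 1) (-(1/2))) *
    mpow (σ + ε • 1) (1/2))).re

/-- The maximal `f`-divergence of positive semidefinite matrices, defined as the limit
(realized as a `limsup` in `EReal`, which agrees with the limit whenever it exists)
of the ε-regularizations as `ε → 0⁺`. -/
noncomputable def hatSf {n : ℕ} (f : ℝ → ℝ) (ρ σ : Matrix (Fin n) (Fin n) ℂ) : EReal :=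
  Filter.limsup (fun ε : ℝ => ((maxSfEps f ρ σ ε : ℝ) : EReal))
    (nhdsWithin 0 (Set.Ioi 0))

/-!
Compressing a positive definite `X` by an isometry `V` does not see the off-diagonal part of `X`
relative to the range of `V`, and that part is removed by averaging `X` with its unitary reflection
across the range. Operator convexity applied to this average gives Jensen's operator inequality
`f (Vᴴ A V + Wᴴ B W) ≤ Vᴴ f(A) V + Wᴴ f(B) W` for `Vᴴ V + Wᴴ W = 1`. The choice
`V = B₁^{1/2} (B₁ + B₂)^{-1/2}`, `W = B₂^{1/2} (B₁ + B₂)^{-1/2}` turns it into subadditivity of the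
perspective `(A, B) ↦ B^{1/2} f(B^{-1/2} A B^{-1/2}) B^{1/2}`, which is also positively homogeneous.

Splitting `(ρ + δI, σ + δI)` as `(ρ + εI, σ + εI) + (δ - ε) (I, I)` shows that the regularised
divergence is antitone in `ε` up to a term linear in `ε`, so it converges in `(-∞, +∞]` as `ε → 0⁺`.
Since the sum of two `ε`-regularised pairs is a `2ε`-regularised pair, the limit is again
subadditive and positively homogeneous, hence jointly convex.
-/

section FunctionalCalculus

variable {𝕜 l m n : Type*} [RCLike 𝕜] [Fintype l] [DecidableEq l] [Fintype m] [DecidableEq m]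
  [Fintype n] [DecidableEq n]

lemma continuousOn_real_spectrum (f : ℝ → ℝ) (A : Matrix n n 𝕜) :
    ContinuousOn f (spectrum ℝ A) :=
  A.finite_real_spectrum.continuousOn f

lemma exists_polynomial_aeval_eq_cfc (f : ℝ → ℝ) {X : Matrix m m 𝕜} {Y : Matrix n n 𝕜}
    (hX : X.IsHermitian) (hY : Y.IsHermitian) :
    ∃ q : Polynomial ℝ, Polynomial.aeval X q = cfc f X ∧ Polynomial.aeval Y q = cfc f Y := by
  set nodes : Finset ℝ :=
    X.finite_real_spectrum.toFinset ∪ Y.finite_real_spectrum.toFinset with h_nodes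
  set q : Polynomial ℝ := Lagrange.interpolate nodes id f
  have hq : ∀ x ∈ nodes, q.eval x = f x := fun x hx =>
    Lagrange.eval_interpolate_at_node f (Set.injOn_id _) hx
  refine ⟨q, ?_, ?_⟩
  · rw [← cfc_polynomial q X hX]
    exact cfc_congr fun x hx => hq x (by simp [h_nodes, hx])
  · rw [← cfc_polynomial q Y hY]
    exact cfc_congr fun x hx => hq x (by simp [h_nodes, hx])

lemma pow_mul_eq_mul_pow {R : Type*} [Semiring R] {X : Matrix m m R} {Y : Matrix n n R}
    {V : Matrix m n R} (h : X * V = V * Y) (k : ℕ) : X ^ k * V = V * Y ^ k := by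
  induction k with
  | zero => simp
  | succ k ih =>
    rw [pow_succ, Matrix.mul_assoc, h, ← Matrix.mul_assoc, ih, Matrix.mul_assoc, ← pow_succ]

lemma aeval_mul_eq_mul_aeval {R S : Type*} [CommSemiring R] [CommSemiring S] [Algebra R S]
    {X : Matrix m m S} {Y : Matrix n n S} {V : Matrix m n S} (h : X * V = V * Y)
    (q : Polynomial R) : Polynomial.aeval X q * V = V * Polynomial.aeval Y q := by
  simp only [Polynomial.aeval_eq_sum_range, Matrix.sum_mul, Matrix.mul_sum, Matrix.smul_mul,
    Matrix.mul_smul, pow_mul_eq_mul_pow h]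

lemma cfc_mul_eq_mul_cfc (f : ℝ → ℝ) {X : Matrix m m 𝕜} {Y : Matrix n n 𝕜} {V : Matrix m n 𝕜}
    (hX : X.IsHermitian) (hY : Y.IsHermitian) (h : X * V = V * Y) :
    cfc f X * V = V * cfc f Y := by
  obtain ⟨q, hqX, hqY⟩ := exists_polynomial_aeval_eq_cfc f hX hY
  rw [← hqX, ← hqY, aeval_mul_eq_mul_aeval h]

lemma cfc_conjTranspose_mul_mul_of_invariant (f : ℝ → ℝ) {X : Matrix m m 𝕜} {V : Matrix m n 𝕜}
    (hX : X.IsHermitian) (hV : Vᴴ * V = 1) (h : X * V = V * (Vᴴ * X * V)) :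
    cfc f (Vᴴ * X * V) = Vᴴ * cfc f X * V := by
  rw [Matrix.mul_assoc Vᴴ (cfc f X) V,
    cfc_mul_eq_mul_cfc f hX (isHermitian_conjTranspose_mul_mul V hX) h, ← Matrix.mul_assoc, hV,
    Matrix.one_mul]

lemma cfc_conjTranspose_mul_mul_of_unitary (f : ℝ → ℝ) {X : Matrix m m 𝕜} {U : Matrix m n 𝕜}
    (hX : X.IsHermitian) (hU : Uᴴ * U = 1) (hU' : U * Uᴴ = 1) :
    cfc f (Uᴴ * X * U) = Uᴴ * cfc f X * U :=
  cfc_conjTranspose_mul_mul_of_invariant f hX hU <| by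
    rw [← Matrix.mul_assoc, ← Matrix.mul_assoc, hU', Matrix.one_mul]

lemma cfc_submatrix_equiv (f : ℝ → ℝ) {A : Matrix m m 𝕜} (hA : A.IsHermitian) (e : n ≃ m) :
    cfc f (A.submatrix e e) = (cfc f A).submatrix e e := by
  set P : Matrix m n 𝕜 := (1 : Matrix m m 𝕜).submatrix id e
  have hP (B : Matrix m m 𝕜) : Pᴴ * B * P = B.submatrix e e := by
    ext i j
    simp [P, Matrix.mul_apply, Matrix.one_apply]
  have hPP : Pᴴ * P = 1 := by simpa using hP 1
  have hPP' : P * Pᴴ = 1 := by simp [P, conjTranspose_submatrix]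
  rw [← hP, ← hP, cfc_conjTranspose_mul_mul_of_unitary f hA hPP hPP']

lemma cfc_fromBlocks_diagonal (f : ℝ → ℝ) {A : Matrix l l 𝕜} {B : Matrix m m 𝕜}
    (hA : A.IsHermitian) (hB : B.IsHermitian) :
    cfc f (fromBlocks A 0 0 B) = fromBlocks (cfc f A) 0 0 (cfc f B) := by
  set J : Matrix (l ⊕ m) l 𝕜 := fromRows 1 0 with hJ
  set K : Matrix (l ⊕ m) m 𝕜 := fromRows 0 1 with hK
  have hAB : (fromBlocks A 0 0 B).IsHermitian := hA.fromBlocks (by simp) hB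
  have left : cfc f (fromBlocks A 0 0 B) * J = J * cfc f A :=
    cfc_mul_eq_mul_cfc f hAB hA (by simp [J, fromBlocks_mul_fromRows, fromRows_mul])
  have right : cfc f (fromBlocks A 0 0 B) * K = K * cfc f B :=
    cfc_mul_eq_mul_cfc f hAB hB (by simp [K, fromBlocks_mul_fromRows, fromRows_mul])
  calc cfc f (fromBlocks A 0 0 B)
      = cfc f (fromBlocks A 0 0 B) * fromCols J K := by
        rw [hJ, hK, fromCols_fromRows_eq_fromBlocks, fromBlocks_one, Matrix.mul_one]
    _ = fromCols (J * cfc f A) (K * cfc f B) := by rw [mul_fromCols, left, right]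
    _ = fromBlocks (cfc f A) 0 0 (cfc f B) := by
        rw [hJ, hK, fromRows_mul, fromRows_mul, fromCols_fromRows_eq_fromBlocks]
        simp only [Matrix.one_mul, Matrix.zero_mul]

lemma posDef_fromBlocks_diagonal {l m : Type*} [Finite l] [Finite m] {A : Matrix l l 𝕜}
    {B : Matrix m m 𝕜} (hA : A.PosDef) (hB : B.PosDef) : (fromBlocks A 0 0 B).PosDef := by
  classical
  have := Fintype.ofFinite l
  have := Fintype.ofFinite m
  have : Invertible A := hA.isUnit.invertible
  have hAB : (fromBlocks A 0 0 B).PosSemidef := by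
    simpa using (PosDef.fromBlocks₁₁ 0 B hA).2 (by simpa using hB.posSemidef)
  rw [hAB.posDef_iff_det_ne_zero, det_fromBlocks_zero₂₁]
  exact mul_ne_zero hA.det_pos.ne' hB.det_pos.ne'

end FunctionalCalculus

section RangeReflection

variable {𝕜 m n : Type*} [RCLike 𝕜] [DecidableEq m] [Fintype n]

/-- The reflection `2VVᴴ - 1` across the range of an isometry `V`: the unitary that fixes the range
of `V` and is `-1` on its orthogonal complement. -/
def rangeReflection (V : Matrix m n 𝕜) : Matrix m m 𝕜 := (2 : ℝ) • (V * Vᴴ) - 1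

lemma conjTranspose_rangeReflection (V : Matrix m n 𝕜) :
    (rangeReflection V)ᴴ = rangeReflection V := by
  simp [rangeReflection]

variable [Fintype m]

/-- The average of `X` and its reflection `ZXZ`, `Z = 2VVᴴ - 1`: the block-diagonal part of `X` with
respect to the range of the isometry `V` and its orthogonal complement. The second weight is written
`1 - 1 / 2` to match the convex combinations in `OperatorConvexOn`. -/
noncomputable def rangePinching (V : Matrix m n 𝕜) (X : Matrix m m 𝕜) : Matrix m m 𝕜 :=
  (1 / 2 : ℝ) • X + (1 - 1 / 2 : ℝ) • (rangeReflection V * X * rangeReflection V)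

lemma isHermitian_rangePinching (V : Matrix m n 𝕜) {X : Matrix m m 𝕜} (hX : X.IsHermitian) :
    (rangePinching V X).IsHermitian := by
  have hZXZ := isHermitian_conjTranspose_mul_mul (rangeReflection V) hX
  rw [conjTranspose_rangeReflection] at hZXZ
  exact (hX.smul (.all _)).add (hZXZ.smul (.all _))

variable [DecidableEq n] {V : Matrix m n 𝕜} (hV : Vᴴ * V = 1)

include hV

lemma rangeReflection_mul : rangeReflection V * V = V := by
  rw [rangeReflection, Matrix.sub_mul, Matrix.smul_mul, Matrix.mul_assoc, hV, Matrix.mul_one,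
    Matrix.one_mul, two_smul, add_sub_cancel_right]

lemma conjTranspose_mul_rangeReflection : Vᴴ * rangeReflection V = Vᴴ := by
  simpa [conjTranspose_rangeReflection] using congrArg conjTranspose (rangeReflection_mul hV)

lemma rangeReflection_mul_self : rangeReflection V * rangeReflection V = 1 := by
  nth_rewrite 2 [rangeReflection]
  rw [Matrix.mul_sub, Matrix.mul_smul, ← Matrix.mul_assoc, rangeReflection_mul hV, Matrix.mul_one,
    rangeReflection, sub_sub_cancel]

lemma conjTranspose_mul_rangePinching_mul (X : Matrix m m 𝕜) :
    Vᴴ * rangePinching V X * V = Vᴴ * X * V := by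
  have hreflect : Vᴴ * (rangeReflection V * X * rangeReflection V) * V = Vᴴ * X * V := by
    rw [Matrix.mul_assoc Vᴴ, Matrix.mul_assoc (rangeReflection V * X), rangeReflection_mul hV,
      Matrix.mul_assoc (rangeReflection V), ← Matrix.mul_assoc,
      conjTranspose_mul_rangeReflection hV, Matrix.mul_assoc]
  rw [rangePinching, Matrix.mul_add, Matrix.add_mul, Matrix.mul_smul, Matrix.mul_smul,
    Matrix.smul_mul, Matrix.smul_mul, hreflect, ← add_smul, add_sub_cancel, one_smul]

lemma rangePinching_mul (X : Matrix m m 𝕜) :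
    rangePinching V X * V = V * (Vᴴ * rangePinching V X * V) := by
  calc rangePinching V X * V = (1 / 2 : ℝ) • ((1 + rangeReflection V) * (X * V)) := by
        rw [rangePinching, Matrix.add_mul, Matrix.smul_mul, Matrix.smul_mul,
          Matrix.mul_assoc _ (rangeReflection V) V, rangeReflection_mul hV,
          Matrix.mul_assoc (rangeReflection V), Matrix.add_mul, Matrix.one_mul, smul_add]
        norm_num
    _ = V * Vᴴ * (X * V) := by
        rw [rangeReflection, add_sub_cancel, Matrix.smul_mul, smul_smul]
        norm_num
    _ = V * (Vᴴ * rangePinching V X * V) := by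
        rw [conjTranspose_mul_rangePinching_mul hV]
        simp only [Matrix.mul_assoc]

end RangeReflection

section LoewnerOrder

open scoped MatrixOrder

variable {m n : Type*} [Fintype m] {A B : Matrix m m ℂ}

lemma conjTranspose_mul_mul_le_conjTranspose_mul_mul [Finite n] (h : A ≤ B) (V : Matrix m n ℂ) :
    Vᴴ * A * V ≤ Vᴴ * B * V := by
  have := Fintype.ofFinite n
  rw [Matrix.le_iff, ← Matrix.sub_mul, ← Matrix.mul_sub]
  exact (Matrix.le_iff.1 h).conjTranspose_mul_mul_same V

lemma re_trace_le_re_trace (h : A ≤ B) : A.trace.re ≤ B.trace.re := by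
  have := (Complex.le_def.1 (Matrix.le_iff.1 h).trace_nonneg).1
  simpa [Matrix.trace_sub] using this

lemma pos_of_mem_spectrum [DecidableEq m] (hA : A.PosDef) {x : ℝ} (hx : x ∈ spectrum ℝ A) :
    0 < x :=
  hA.isStrictlyPositive.spectrum_pos hx

end LoewnerOrder

namespace OperatorConvexOn

open scoped MatrixOrder

variable {f : ℝ → ℝ} (hf : OperatorConvexOn f) {l m n : Type*} [Fintype l] [DecidableEq l]
  [Fintype m] [DecidableEq m] [Fintype n] [DecidableEq n]

include hf

lemma cfc_convexCombination_le {A B : Matrix m m ℂ} (hA : A.PosDef) (hB : B.PosDef) {t : ℝ}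
    (ht₀ : 0 ≤ t) (ht₁ : t ≤ 1) :
    cfc f (t • A + (1 - t) • B) ≤ t • cfc f A + (1 - t) • cfc f B := by
  set e := (Fintype.equivFin m).symm
  have hcfc {C : Matrix m m ℂ} (hC : C.IsHermitian) :
      cfc f (C.submatrix e e) = (cfc f C).submatrix e e := cfc_submatrix_equiv f hC e
  have hAB : (t • A + (1 - t) • B).IsHermitian :=
    (hA.isHermitian.smul (.all _)).add (hB.isHermitian.smul (.all _))
  have key := hf _ _ _ (hA.submatrix e.injective) (hB.submatrix e.injective) t ht₀ ht₁
  rw [Matrix.le_iff, ← posSemidef_submatrix_equiv e]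
  have hcomb (C D : Matrix m m ℂ) : t • C.submatrix e e + (1 - t) • D.submatrix e e =
      (t • C + (1 - t) • D).submatrix e e := rfl
  rwa [hcfc hA.isHermitian, hcfc hB.isHermitian, hcomb, hcomb, hcfc hAB] at key

lemma cfc_rangePinching_le {X : Matrix m m ℂ} (hX : X.PosDef) {V : Matrix m n ℂ}
    (hV : Vᴴ * V = 1) : cfc f (rangePinching V X) ≤ rangePinching V (cfc f X) := by
  set Z := rangeReflection V with hZ
  have hZH : Zᴴ = Z := conjTranspose_rangeReflection V
  have hZZ : Z * Z = 1 := rangeReflection_mul_self hV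
  have hZXZ : (Z * X * Z).PosDef := by
    simpa only [hZH] using hX.conjTranspose_mul_mul_same (B := Z)
      (mulVec_injective_of_isUnit (.of_mul_eq_one Z hZZ))
  have hcfc : cfc f (Z * X * Z) = Z * cfc f X * Z := by
    simpa only [hZH] using cfc_conjTranspose_mul_mul_of_unitary f (U := Z) hX.isHermitian
      (by rwa [hZH]) (by rwa [hZH])
  rw [rangePinching, rangePinching, ← hZ, ← hcfc]
  exact hf.cfc_convexCombination_le hX hZXZ (by norm_num) (by norm_num)

lemma cfc_compression_le {X : Matrix m m ℂ} (hX : X.PosDef) {V : Matrix m n ℂ}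
    (hV : Vᴴ * V = 1) : cfc f (Vᴴ * X * V) ≤ Vᴴ * cfc f X * V :=
  calc cfc f (Vᴴ * X * V)
      = cfc f (Vᴴ * rangePinching V X * V) := by rw [conjTranspose_mul_rangePinching_mul hV]
    _ = Vᴴ * cfc f (rangePinching V X) * V :=
        cfc_conjTranspose_mul_mul_of_invariant f (isHermitian_rangePinching V hX.isHermitian) hV
          (rangePinching_mul hV X)
    _ ≤ Vᴴ * rangePinching V (cfc f X) * V :=
        conjTranspose_mul_mul_le_conjTranspose_mul_mul (hf.cfc_rangePinching_le hX hV) V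
    _ = Vᴴ * cfc f X * V := conjTranspose_mul_rangePinching_mul hV _

lemma cfc_conjTranspose_mul_mul_add_le {A : Matrix l l ℂ} {B : Matrix m m ℂ} (hA : A.PosDef)
    (hB : B.PosDef) {V : Matrix l n ℂ} {W : Matrix m n ℂ} (hVW : Vᴴ * V + Wᴴ * W = 1) :
    cfc f (Vᴴ * A * V + Wᴴ * B * W) ≤ Vᴴ * cfc f A * V + Wᴴ * cfc f B * W := by
  have hcompress (C : Matrix l l ℂ) (D : Matrix m m ℂ) :
      (fromRows V W)ᴴ * fromBlocks C 0 0 D * fromRows V W = Vᴴ * C * V + Wᴴ * D * W := by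
    simp [conjTranspose_fromRows_eq_fromCols_conjTranspose, fromCols_mul_fromBlocks,
      fromCols_mul_fromRows]
  have hisometry : (fromRows V W)ᴴ * fromRows V W = 1 := by
    rw [conjTranspose_fromRows_eq_fromCols_conjTranspose, fromCols_mul_fromRows, hVW]
  have key := hf.cfc_compression_le (posDef_fromBlocks_diagonal hA hB) hisometry
  rwa [cfc_fromBlocks_diagonal f hA.isHermitian hB.isHermitian, hcompress, hcompress] at key

end OperatorConvexOn

section MoorePenrosePower

variable {n : ℕ} {A : Matrix (Fin n) (Fin n) ℂ}

lemma conjTranspose_mpow (A : Matrix (Fin n) (Fin n) ℂ) (t : ℝ) : (mpow A t)ᴴ = mpow A t :=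
  cfc_predicate (p := IsSelfAdjoint) _ A

lemma mpow_eq_cfc_rpow (hA : A.PosDef) (t : ℝ) : mpow A t = cfc (fun x : ℝ => x ^ t) A :=
  cfc_congr fun _ hx => if_neg (pos_of_mem_spectrum hA hx).ne'

lemma mpow_mul_mpow (hA : A.PosDef) (s t : ℝ) : mpow A s * mpow A t = mpow A (s + t) := by
  simp only [mpow_eq_cfc_rpow hA]
  rw [← cfc_mul _ _ A (continuousOn_real_spectrum _ A) (continuousOn_real_spectrum _ A)]
  exact cfc_congr fun x hx => (Real.rpow_add (pos_of_mem_spectrum hA hx) s t).symm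

lemma mpow_one (hA : A.PosDef) : mpow A 1 = A := by
  simp only [mpow_eq_cfc_rpow hA, Real.rpow_one]
  exact cfc_id' ℝ A hA.isHermitian

lemma mpow_zero (hA : A.PosDef) : mpow A 0 = 1 := by
  simp only [mpow_eq_cfc_rpow hA, Real.rpow_zero]
  exact cfc_const_one ℝ A hA.isHermitian

lemma mpow_smul (hA : A.PosDef) {c : ℝ} (hc : 0 < c) (t : ℝ) :
    mpow (c • A) t = c ^ t • mpow A t := by
  rw [mpow_eq_cfc_rpow hA, mpow_eq_cfc_rpow (hA.smul hc),
    ← cfc_smul _ _ A (continuousOn_real_spectrum _ A)]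
  refine (cfc_comp_const_mul c (fun x : ℝ => x ^ t) A
    ((A.finite_real_spectrum.image _).continuousOn _) hA.isHermitian).symm.trans ?_
  exact cfc_congr fun x hx => Real.mul_rpow hc.le (pos_of_mem_spectrum hA hx).le

lemma mpow_half_mul_mpow_half (hA : A.PosDef) : mpow A (1 / 2) * mpow A (1 / 2) = A := by
  rw [mpow_mul_mpow hA, add_halves, mpow_one hA]

lemma mpow_half_mul_mpow_neg_half (hA : A.PosDef) : mpow A (1 / 2) * mpow A (-(1 / 2)) = 1 := by
  rw [mpow_mul_mpow hA, add_neg_cancel, mpow_zero hA]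

lemma mpow_neg_half_mul_mpow_half (hA : A.PosDef) : mpow A (-(1 / 2)) * mpow A (1 / 2) = 1 := by
  rw [mpow_mul_mpow hA, neg_add_cancel, mpow_zero hA]

end MoorePenrosePower

section Perspective

open scoped MatrixOrder

variable {n : ℕ}

/-- The relative density `B^{-1/2} A B^{-1/2}` of `A` with respect to `B`, a noncommutative quotient
of `A` by `B`. -/
noncomputable def relDensity (A B : Matrix (Fin n) (Fin n) ℂ) : Matrix (Fin n) (Fin n) ℂ :=
  mpow B (-(1 / 2)) * A * mpow B (-(1 / 2))

/-- The matrix `T = A^{1/2} B^{-1/2}`, a (non-Hermitian) square root of the relative density of `A`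
with respect to `B` in the sense that `Tᴴ * T = relDensity A B`. -/
noncomputable def relRoot (A B : Matrix (Fin n) (Fin n) ℂ) : Matrix (Fin n) (Fin n) ℂ :=
  mpow A (1 / 2) * mpow B (-(1 / 2))

/-- The operator perspective `B^{1/2} f(B^{-1/2} A B^{-1/2}) B^{1/2}` of `f`, whose trace is the
maximal `f`-divergence of the positive definite matrices `A` and `B`. -/
noncomputable def perspective (f : ℝ → ℝ) (A B : Matrix (Fin n) (Fin n) ℂ) :
    Matrix (Fin n) (Fin n) ℂ :=
  mpow B (1 / 2) * cfc f (relDensity A B) * mpow B (1 / 2)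

variable {A A₁ A₂ B B₁ B₂ : Matrix (Fin n) (Fin n) ℂ}

lemma relDensity_add (A₁ A₂ B : Matrix (Fin n) (Fin n) ℂ) :
    relDensity (A₁ + A₂) B = relDensity A₁ B + relDensity A₂ B := by
  simp only [relDensity, Matrix.mul_add, Matrix.add_mul]

lemma relDensity_self (hB : B.PosDef) : relDensity B B = 1 := by
  calc relDensity B B
      = mpow B (-(1 / 2)) * (mpow B (1 / 2) * mpow B (1 / 2)) * mpow B (-(1 / 2)) := by
        rw [mpow_half_mul_mpow_half hB, relDensity]
    _ = (mpow B (-(1 / 2)) * mpow B (1 / 2)) * (mpow B (1 / 2) * mpow B (-(1 / 2))) := by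
        simp only [Matrix.mul_assoc]
    _ = 1 := by
        rw [mpow_neg_half_mul_mpow_half hB, mpow_half_mul_mpow_neg_half hB, Matrix.one_mul]

lemma posDef_relDensity (hA : A.PosDef) (hB : B.PosDef) : (relDensity A B).PosDef := by
  simpa only [relDensity, conjTranspose_mpow] using
    hA.conjTranspose_mul_mul_same (B := mpow B (-(1 / 2)))
      (mulVec_injective_of_isUnit (.of_mul_eq_one _ (mpow_neg_half_mul_mpow_half hB)))

lemma conjTranspose_relRoot (A B : Matrix (Fin n) (Fin n) ℂ) :
    (relRoot A B)ᴴ = mpow B (-(1 / 2)) * mpow A (1 / 2) := by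
  rw [relRoot, conjTranspose_mul, conjTranspose_mpow, conjTranspose_mpow]

lemma conjTranspose_relRoot_mul_relRoot (hA : A.PosDef) (B : Matrix (Fin n) (Fin n) ℂ) :
    (relRoot A B)ᴴ * relRoot A B = relDensity A B := by
  calc (relRoot A B)ᴴ * relRoot A B
      = mpow B (-(1 / 2)) * (mpow A (1 / 2) * mpow A (1 / 2)) * mpow B (-(1 / 2)) := by
        rw [conjTranspose_relRoot, relRoot]
        simp only [Matrix.mul_assoc]
    _ = relDensity A B := by rw [mpow_half_mul_mpow_half hA, relDensity]

lemma conjTranspose_relRoot_mul_relDensity_mul_relRoot (A : Matrix (Fin n) (Fin n) ℂ)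
    (hB₁ : B₁.PosDef) (B : Matrix (Fin n) (Fin n) ℂ) :
    (relRoot B₁ B)ᴴ * relDensity A B₁ * relRoot B₁ B = relDensity A B := by
  calc (relRoot B₁ B)ᴴ * relDensity A B₁ * relRoot B₁ B
      = mpow B (-(1 / 2)) * (mpow B₁ (1 / 2) * mpow B₁ (-(1 / 2))) * A *
          (mpow B₁ (-(1 / 2)) * mpow B₁ (1 / 2)) * mpow B (-(1 / 2)) := by
        rw [conjTranspose_relRoot, relRoot, relDensity]
        simp only [Matrix.mul_assoc]
    _ = relDensity A B := by
        rw [mpow_half_mul_mpow_neg_half hB₁, mpow_neg_half_mul_mpow_half hB₁, Matrix.mul_one,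
          Matrix.mul_one, relDensity]

lemma relRoot_mul_mpow_half (A : Matrix (Fin n) (Fin n) ℂ) (hB : B.PosDef) :
    relRoot A B * mpow B (1 / 2) = mpow A (1 / 2) := by
  rw [relRoot, Matrix.mul_assoc, mpow_neg_half_mul_mpow_half hB, Matrix.mul_one]

lemma mpow_half_mul_conjTranspose_relRoot (A : Matrix (Fin n) (Fin n) ℂ) (hB : B.PosDef) :
    mpow B (1 / 2) * (relRoot A B)ᴴ = mpow A (1 / 2) := by
  rw [conjTranspose_relRoot, ← Matrix.mul_assoc, mpow_half_mul_mpow_neg_half hB, Matrix.one_mul]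

lemma mpow_half_mul_conj_relRoot_mul_mpow_half (f : ℝ → ℝ) (A B₁ : Matrix (Fin n) (Fin n) ℂ)
    (hB : B.PosDef) :
    mpow B (1 / 2) * ((relRoot B₁ B)ᴴ * cfc f (relDensity A B₁) * relRoot B₁ B) * mpow B (1 / 2) =
      perspective f A B₁ := by
  calc mpow B (1 / 2) * ((relRoot B₁ B)ᴴ * cfc f (relDensity A B₁) * relRoot B₁ B) *
        mpow B (1 / 2)
      = mpow B (1 / 2) * (relRoot B₁ B)ᴴ * cfc f (relDensity A B₁) *
          (relRoot B₁ B * mpow B (1 / 2)) := by simp only [Matrix.mul_assoc]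
    _ = perspective f A B₁ := by
        rw [mpow_half_mul_conjTranspose_relRoot B₁ hB, relRoot_mul_mpow_half B₁ hB, perspective]

lemma OperatorConvexOn.perspective_add_le {f : ℝ → ℝ} (hf : OperatorConvexOn f) (hA₁ : A₁.PosDef)
    (hA₂ : A₂.PosDef) (hB₁ : B₁.PosDef) (hB₂ : B₂.PosDef) :
    perspective f (A₁ + A₂) (B₁ + B₂) ≤ perspective f A₁ B₁ + perspective f A₂ B₂ := by
  set B := B₁ + B₂ with hB_def
  have hB : B.PosDef := hB₁.add hB₂
  set T₁ := relRoot B₁ B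
  set T₂ := relRoot B₂ B
  have hpartition : T₁ᴴ * T₁ + T₂ᴴ * T₂ = 1 := by
    rw [conjTranspose_relRoot_mul_relRoot hB₁, conjTranspose_relRoot_mul_relRoot hB₂,
      ← relDensity_add, ← hB_def, relDensity_self hB]
  have jensen : cfc f (relDensity (A₁ + A₂) B) ≤
      T₁ᴴ * cfc f (relDensity A₁ B₁) * T₁ + T₂ᴴ * cfc f (relDensity A₂ B₂) * T₂ := by
    simpa only [T₁, T₂, conjTranspose_relRoot_mul_relDensity_mul_relRoot _ hB₁,
      conjTranspose_relRoot_mul_relDensity_mul_relRoot _ hB₂, ← relDensity_add] using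
      hf.cfc_conjTranspose_mul_mul_add_le (posDef_relDensity hA₁ hB₁) (posDef_relDensity hA₂ hB₂)
        hpartition
  have conjugated := conjTranspose_mul_mul_le_conjTranspose_mul_mul jensen (mpow B (1 / 2))
  rwa [conjTranspose_mpow, Matrix.mul_add, Matrix.add_mul,
    mpow_half_mul_conj_relRoot_mul_mpow_half f A₁ B₁ hB,
    mpow_half_mul_conj_relRoot_mul_mpow_half f A₂ B₂ hB] at conjugated

lemma relDensity_smul (A : Matrix (Fin n) (Fin n) ℂ) (hB : B.PosDef) {c : ℝ} (hc : 0 < c) :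
    relDensity (c • A) (c • B) = relDensity A B := by
  have hpow : c ^ (-(1 / 2) : ℝ) * (c * c ^ (-(1 / 2) : ℝ)) = 1 := by
    nth_rewrite 2 [← Real.rpow_one c]
    rw [← Real.rpow_add hc, ← Real.rpow_add hc]
    norm_num
  simp only [relDensity, mpow_smul hB hc, Matrix.smul_mul, Matrix.mul_smul, smul_smul]
  rw [hpow, one_smul]

lemma perspective_smul (f : ℝ → ℝ) (A : Matrix (Fin n) (Fin n) ℂ) (hB : B.PosDef) {c : ℝ}
    (hc : 0 < c) : perspective f (c • A) (c • B) = c • perspective f A B := by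
  have hpow : c ^ (1 / 2 : ℝ) * c ^ (1 / 2 : ℝ) = c := by
    rw [← Real.rpow_add hc, add_halves, Real.rpow_one]
  simp only [perspective, relDensity_smul A hB hc, mpow_smul hB hc, Matrix.smul_mul,
    Matrix.mul_smul, smul_smul, hpow]

end Perspective

section Limits

open scoped Topology

lemma map_const_mul_nhdsGT_zero {𝕜 : Type*} [Field 𝕜] [LinearOrder 𝕜] [IsStrictOrderedRing 𝕜]
    [TopologicalSpace 𝕜] [IsTopologicalRing 𝕜] {c : 𝕜} (hc : 0 < c) :
    map (c * ·) (𝓝[>] (0 : 𝕜)) = 𝓝[>] 0 := by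
  have h := (Homeomorph.mulLeft₀ c hc.ne').isEmbedding.map_nhdsWithin_eq (Set.Ioi 0) 0
  simpa [Set.image_mul_left_Ioi hc] using h

lemma limsup_comp_const_mul_nhdsGT_zero {𝕜 α : Type*} [Field 𝕜] [LinearOrder 𝕜]
    [IsStrictOrderedRing 𝕜] [TopologicalSpace 𝕜] [IsTopologicalRing 𝕜]
    [ConditionallyCompleteLattice α] (u : 𝕜 → α) {c : 𝕜} (hc : 0 < c) :
    limsup (fun x => u (c * x)) (𝓝[>] 0) = limsup u (𝓝[>] 0) :=
  (limsup_comp u (c * ·) _).trans (by rw [map_const_mul_nhdsGT_zero hc])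

lemma tendsto_mul_const_nhdsGT_zero {𝕜 : Type*} [MulZeroClass 𝕜] [Preorder 𝕜] [TopologicalSpace 𝕜]
    [SeparatelyContinuousMul 𝕜] (c : 𝕜) : Tendsto (· * c) (𝓝[>] 0) (𝓝 0) := by
  simpa using ((continuous_mul_const c).tendsto 0).mono_left nhdsWithin_le_nhds

lemma exists_tendsto_coe_ereal_of_antitoneOn {g : ℝ → ℝ} {a : ℝ} (hg : AntitoneOn g (Set.Ioi a)) :
    ∃ L : EReal, L ≠ ⊥ ∧ Tendsto (fun x => (g x : EReal)) (𝓝[>] a) (𝓝 L) := by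
  have hg' : AntitoneOn (fun x => (g x : EReal)) (Set.Ioi a) := fun x hx y hy hxy =>
    EReal.coe_le_coe_iff.2 (hg hx hy hxy)
  refine ⟨_, ne_bot_of_le_ne_bot (EReal.coe_ne_bot (g (a + 1))) ?_,
    hg'.tendsto_nhdsGT (OrderTop.bddAbove _)⟩
  exact le_sSup (Set.mem_image_of_mem _ (by simp))

lemma tendsto_coe_ereal_add {α : Type*} {F : Filter α} {u v : α → ℝ} {L : EReal} {r : ℝ}
    (hL : L ≠ ⊥) (hu : Tendsto (fun x => (u x : EReal)) F (𝓝 L)) (hv : Tendsto v F (𝓝 r)) :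
    Tendsto (fun x => ((u x + v x : ℝ) : EReal)) F (𝓝 (L + r)) := by
  simp only [EReal.coe_add]
  exact (EReal.continuousAt_add (p := (L, (r : EReal))) (.inr (EReal.coe_ne_bot r))
    (.inl hL)).tendsto.comp (hu.prodMk_nhds (EReal.tendsto_coe.2 hv))

end Limits

section MaximalDivergence

open scoped Topology

variable {n : ℕ} {f : ℝ → ℝ} {ρ σ ρ' σ' : Matrix (Fin n) (Fin n) ℂ}

lemma posDef_add_smul_one (hρ : ρ.PosSemidef) {ε : ℝ} (hε : 0 < ε) : (ρ + ε • 1).PosDef :=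
  .posSemidef_add hρ (PosDef.one.smul hε)

lemma maxSfEps_eq_re_trace_perspective (f : ℝ → ℝ) (ρ σ : Matrix (Fin n) (Fin n) ℂ) (ε : ℝ) :
    maxSfEps f ρ σ ε = (perspective f (ρ + ε • 1) (σ + ε • 1)).trace.re :=
  rfl

lemma maxSfEps_zero_zero (f : ℝ → ℝ) {ε : ℝ} (hε : 0 < ε) :
    maxSfEps f (0 : Matrix (Fin n) (Fin n) ℂ) 0 ε =
      ε * (perspective f (1 : Matrix (Fin n) (Fin n) ℂ) 1).trace.re := by
  rw [maxSfEps_eq_re_trace_perspective, zero_add, perspective_smul f _ .one hε]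
  simp [Matrix.trace_smul]

lemma maxSfEps_smul (f : ℝ → ℝ) (ρ : Matrix (Fin n) (Fin n) ℂ) (hσ : σ.PosSemidef) {c ε : ℝ}
    (hc : 0 < c) (hε : 0 < ε) :
    maxSfEps f (c • ρ) (c • σ) (c * ε) = c * maxSfEps f ρ σ ε := by
  simp only [maxSfEps_eq_re_trace_perspective, mul_smul, ← smul_add]
  rw [perspective_smul f _ (posDef_add_smul_one hσ hε) hc]
  simp [Matrix.trace_smul]

lemma OperatorConvexOn.maxSfEps_add_le (hf : OperatorConvexOn f) (hρ : ρ.PosSemidef)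
    (hσ : σ.PosSemidef) (hρ' : ρ'.PosSemidef) (hσ' : σ'.PosSemidef) {ε δ : ℝ} (hε : 0 < ε)
    (hδ : 0 < δ) :
    maxSfEps f (ρ + ρ') (σ + σ') (ε + δ) ≤ maxSfEps f ρ σ ε + maxSfEps f ρ' σ' δ := by
  have h := re_trace_le_re_trace <| hf.perspective_add_le (posDef_add_smul_one hρ hε)
    (posDef_add_smul_one hρ' hδ) (posDef_add_smul_one hσ hε) (posDef_add_smul_one hσ' hδ)
  rwa [add_add_add_comm, add_add_add_comm σ, ← add_smul, Matrix.trace_add, Complex.add_re] at h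

lemma OperatorConvexOn.antitoneOn_maxSfEps_sub (hf : OperatorConvexOn f) (hρ : ρ.PosSemidef)
    (hσ : σ.PosSemidef) :
    AntitoneOn
      (fun ε => maxSfEps f ρ σ ε - ε * (perspective f (1 : Matrix (Fin n) (Fin n) ℂ) 1).trace.re)
      (Set.Ioi 0) := by
  intro ε hε δ _ hεδ
  obtain rfl | hlt := hεδ.eq_or_lt
  · exact le_rfl
  have h := hf.maxSfEps_add_le hρ hσ .zero .zero hε (sub_pos.2 hlt)
  rw [maxSfEps_zero_zero f (sub_pos.2 hlt), add_zero, add_zero, add_sub_cancel] at h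
  linarith

lemma OperatorConvexOn.exists_tendsto_maxSfEps (hf : OperatorConvexOn f) (hρ : ρ.PosSemidef)
    (hσ : σ.PosSemidef) :
    ∃ L : EReal, L ≠ ⊥ ∧ Tendsto (fun ε => (maxSfEps f ρ σ ε : EReal)) (𝓝[>] 0) (𝓝 L) := by
  obtain ⟨L, hL, hanti⟩ :=
    exists_tendsto_coe_ereal_of_antitoneOn (hf.antitoneOn_maxSfEps_sub hρ hσ)
  set c := (perspective f (1 : Matrix (Fin n) (Fin n) ℂ) 1).trace.re
  exact ⟨L, hL, by simpa using tendsto_coe_ereal_add hL hanti (tendsto_mul_const_nhdsGT_zero c)⟩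

lemma OperatorConvexOn.tendsto_hatSf (hf : OperatorConvexOn f) (hρ : ρ.PosSemidef)
    (hσ : σ.PosSemidef) :
    Tendsto (fun ε => (maxSfEps f ρ σ ε : EReal)) (𝓝[>] 0) (𝓝 (hatSf f ρ σ)) := by
  obtain ⟨L, -, hlim⟩ := hf.exists_tendsto_maxSfEps hρ hσ
  rwa [hatSf, hlim.limsup_eq]

lemma OperatorConvexOn.hatSf_ne_bot (hf : OperatorConvexOn f) (hρ : ρ.PosSemidef)
    (hσ : σ.PosSemidef) : hatSf f ρ σ ≠ ⊥ := by
  obtain ⟨L, hL, hlim⟩ := hf.exists_tendsto_maxSfEps hρ hσ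
  rwa [hatSf, hlim.limsup_eq]

lemma OperatorConvexOn.hatSf_add_le (hf : OperatorConvexOn f) (hρ : ρ.PosSemidef)
    (hσ : σ.PosSemidef) (hρ' : ρ'.PosSemidef) (hσ' : σ'.PosSemidef) :
    hatSf f (ρ + ρ') (σ + σ') ≤ hatSf f ρ σ + hatSf f ρ' σ' :=
  calc hatSf f (ρ + ρ') (σ + σ')
      = limsup (fun ε => (maxSfEps f (ρ + ρ') (σ + σ') (2 * ε) : EReal)) (𝓝[>] 0) :=
        (limsup_comp_const_mul_nhdsGT_zero _ two_pos).symm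
    _ ≤ limsup (fun ε => (maxSfEps f ρ σ ε : EReal) + maxSfEps f ρ' σ' ε) (𝓝[>] 0) := by
        refine limsup_le_limsup ?_
        filter_upwards [self_mem_nhdsWithin] with ε hε
        rw [← EReal.coe_add, EReal.coe_le_coe_iff, two_mul]
        exact hf.maxSfEps_add_le hρ hσ hρ' hσ' hε hε
    _ ≤ hatSf f ρ σ + hatSf f ρ' σ' :=
        EReal.limsup_add_le (.inl (hf.hatSf_ne_bot hρ hσ)) (.inr (hf.hatSf_ne_bot hρ' hσ'))

lemma hatSf_zero_zero (f : ℝ → ℝ) : hatSf f (0 : Matrix (Fin n) (Fin n) ℂ) 0 = 0 := by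
  set c := (perspective f (1 : Matrix (Fin n) (Fin n) ℂ) 1).trace.re
  refine Tendsto.limsup_eq (EReal.tendsto_coe.2 ((tendsto_mul_const_nhdsGT_zero c).congr' ?_))
  filter_upwards [self_mem_nhdsWithin] with ε hε
  exact (maxSfEps_zero_zero f hε).symm

lemma hatSf_smul (f : ℝ → ℝ) (ρ : Matrix (Fin n) (Fin n) ℂ) (hσ : σ.PosSemidef) {c : ℝ}
    (hc : 0 ≤ c) : hatSf f (c • ρ) (c • σ) = c * hatSf f ρ σ := by
  obtain rfl | hc := hc.eq_or_lt
  · simp [hatSf_zero_zero]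
  calc hatSf f (c • ρ) (c • σ)
      = limsup (fun ε => (maxSfEps f (c • ρ) (c • σ) (c * ε) : EReal)) (𝓝[>] 0) :=
        (limsup_comp_const_mul_nhdsGT_zero _ hc).symm
    _ = limsup (fun ε => (c : EReal) * maxSfEps f ρ σ ε) (𝓝[>] 0) := by
        refine limsup_congr ?_
        filter_upwards [self_mem_nhdsWithin] with ε hε
        rw [maxSfEps_smul f ρ hσ hc hε, EReal.coe_mul]
    _ = c * hatSf f ρ σ :=
        EReal.limsup_const_mul_of_nonneg_of_ne_top (EReal.coe_nonneg.2 hc.le) (EReal.coe_ne_top c)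

lemma OperatorConvexOn.hatSf_sum_smul_le (hf : OperatorConvexOn f) {ι : Type*} (s : Finset ι)
    {ρ σ : ι → Matrix (Fin n) (Fin n) ℂ} {w : ι → ℝ} (hw : ∀ i ∈ s, 0 ≤ w i)
    (hρ : ∀ i ∈ s, (ρ i).PosSemidef) (hσ : ∀ i ∈ s, (σ i).PosSemidef) :
    hatSf f (∑ i ∈ s, w i • ρ i) (∑ i ∈ s, w i • σ i) ≤
      ∑ i ∈ s, (w i : EReal) * hatSf f (ρ i) (σ i) := by
  have hsub := Finset.le_sum_of_subadditive_on_pred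
    (fun p : Matrix (Fin n) (Fin n) ℂ × Matrix (Fin n) (Fin n) ℂ => hatSf f p.1 p.2)
    (fun p => p.1.PosSemidef ∧ p.2.PosSemidef) (hatSf_zero_zero f).le
    (fun p q hp hq => hf.hatSf_add_le hp.1 hp.2 hq.1 hq.2)
    (fun p q hp hq => ⟨hp.1.add hq.1, hp.2.add hq.2⟩)
    (fun i => (w i • ρ i, w i • σ i))
    (fun i hi => ⟨(hρ i hi).smul (hw i hi), (hσ i hi).smul (hw i hi)⟩)
  rw [Prod.fst_sum, Prod.snd_sum] at hsub
  exact hsub.trans_eq <| Finset.sum_congr rfl fun i hi => hatSf_smul f _ (hσ i hi) (hw i hi)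

end MaximalDivergence

/-- for operator convex `f`, (1) the limit defining the maximal
`f`-divergence `Ŝ_f(ρ‖σ) = lim_{ε→0⁺} Ŝ_f(ρ+εI‖σ+εI)` exists in `(−∞, +∞]`, and
(2) `Ŝ_f` is jointly convex on pairs of positive semidefinite matrices. -/
theorem stmt11 {n : ℕ} (f : ℝ → ℝ) (hf : OperatorConvexOn f) :
    (∀ ρ σ : Matrix (Fin n) (Fin n) ℂ, ρ.PosSemidef → σ.PosSemidef →
      Filter.Tendsto (fun ε : ℝ => ((maxSfEps f ρ σ ε : ℝ) : EReal))
          (nhdsWithin 0 (Set.Ioi 0)) (nhds (hatSf f ρ σ))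
        ∧ hatSf f ρ σ ≠ ⊥) ∧
    (∀ (k : ℕ) (ρ σ : Fin k → Matrix (Fin n) (Fin n) ℂ) (lam : Fin k → ℝ),
      (∀ i, 0 ≤ lam i) → (∀ i, (ρ i).PosSemidef) → (∀ i, (σ i).PosSemidef) →
        hatSf f (∑ i, lam i • ρ i) (∑ i, lam i • σ i)
          ≤ ∑ i, ((lam i : EReal) * hatSf f (ρ i) (σ i))) := by
  refine ⟨fun ρ σ hρ hσ => ⟨hf.tendsto_hatSf hρ hσ, hf.hatSf_ne_bot hρ hσ⟩, ?_⟩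
  intro k ρ σ lam hlam hρ hσ
  exact hf.hatSf_sum_smul_le Finset.univ (fun i _ => hlam i) (fun i _ => hρ i) fun i _ => hσ i
end
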